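/- There exists a simple graph on 16 vertices whose automorphism group is isomorphic to the alternating group A₅; in particular the minimal number of vertices of a graph with automorphism group A₅ is at most 16 (improving the bound of 60 coming from a graphical regular representation of A₅). -/

import Mathlib

/-- `μ G` is the minimal number of vertices of an undirected simple graph whose
automorphism group is isomorphic to `G`. -/
noncomputable def mu (G : Type*) [Group G] : ℕ :=
  sInf {n : ℕ | ∃ Γ : SimpleGraph (Fin n), Nonempty ((Γ ≃g Γ) ≃* G)}

/-!
The twelve pentagons (Hamiltonian cycles) of `K₅` form two orbits of six under `A₅`. Take one orbit
and join each of its pentagons to the five edges of `K₅` that it contains. Each of the ten edges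
lies on three of the six pentagons, and any two of these pentagons share exactly two edges.

Automorphisms of the resulting graph map edges to edges, because the degrees 5 and 3 differ. An
automorphism that fixes an edge `b` and the pentagons through it is trivial: an edge `c` disjoint
from `b` shares two pentagons with it, and `b` and `c` are the only common neighbours of these two,
so `c` is fixed, and with it the third pentagon through `c`. Disjointness of edges is the adjacency
of the Petersen graph, which is connected, so everything is fixed. Since `A₅` is already transitive
on the triples formed by an edge and an ordered pair of pentagons through it, it is the whole
automorphism group.
-/

section Automorphisms

variable {V W G : Type*} {Γ : SimpleGraph V} {Δ : SimpleGraph W}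

/-- Conjugation by a graph isomorphism, as an isomorphism of automorphism groups. -/
def autCongr (φ : Γ ≃g Δ) : (Γ ≃g Γ) ≃* (Δ ≃g Δ) where
  toEquiv := RelIso.relIsoCongr φ φ
  map_mul' e f := by ext; simp

theorem exists_simpleGraph_fin_aut [Finite V] (Γ : SimpleGraph V) {n : ℕ} (hn : Nat.card V = n) :
    ∃ Δ : SimpleGraph (Fin n), Nonempty ((Δ ≃g Δ) ≃* (Γ ≃g Γ)) := by
  have := Fintype.ofFinite V
  rw [Nat.card_eq_fintype_card] at hn
  exact ⟨Γ.overFin hn, ⟨(autCongr (Γ.overFinIso hn)).symm⟩⟩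

theorem encard_neighborSet_apply (e : Γ ≃g Δ) (v : V) :
    (Δ.neighborSet (e v)).encard = (Γ.neighborSet v).encard :=
  (Set.encard_congr (e.mapNeighborSet v)).symm

section SMul

variable [Group G] [MulAction G V]

/-- The homomorphism to the automorphism group given by an action that preserves adjacency. -/
def smulAut (h : ∀ (g : G) (v w : V), Γ.Adj (g • v) (g • w) ↔ Γ.Adj v w) : G →* (Γ ≃g Γ) where
  toFun g := { MulAction.toPerm g with map_rel_iff' := h g _ _ }
  map_one' := RelIso.ext (one_smul G)
  map_mul' g g' := RelIso.ext (mul_smul g g')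

variable {h : ∀ (g : G) (v w : V), Γ.Adj (g • v) (g • w) ↔ Γ.Adj v w}

@[simp]
theorem smulAut_apply (g : G) (v : V) : smulAut h g v = g • v := rfl

theorem smulAut_injective [FaithfulSMul G V] : Function.Injective (smulAut h) :=
  fun _ _ hg => eq_of_smul_eq_smul fun v => DFunLike.congr_fun hg v

theorem smulAut_surjective_of_base {s : Set V}
    (htrans : ∀ e : Γ ≃g Γ, ∃ g : G, ∀ v ∈ s, g • v = e v)
    (hbase : ∀ e : Γ ≃g Γ, (∀ v ∈ s, e v = v) → e = 1) : Function.Surjective (smulAut h) := by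
  intro e
  obtain ⟨g, hg⟩ := htrans e
  refine ⟨g, inv_mul_eq_one.mp (hbase _ fun v hv => ?_)⟩
  rw [RelIso.mul_apply, ← hg v hv, ← smulAut_apply (h := h), RelIso.inv_apply_self]

end SMul

theorem apply_eq_self_of_encard_le {α : Type*} {f : α → α} (hf : Function.Injective f)
    {s t : Set α} (hs : Set.MapsTo f s s) (ht : ∀ x ∈ t, f x = x) (hts : t ⊆ s) (hfin : t.Finite)
    (hcard : s.encard ≤ t.encard + 1) {x : α} (hx : x ∈ s) : f x = x := by
  by_cases hxt : x ∈ t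
  · exact ht x hxt
  have hins : insert x t = s := by
    refine (hfin.insert x).eq_of_subset_of_encard_le (Set.insert_subset hx hts) ?_
    rwa [Set.encard_insert_of_notMem hxt]
  obtain hfx | hfx : f x = x ∨ f x ∈ t := by simpa [← hins] using hs hx
  · exact hfx
  · exact hf (ht _ hfx)

/-- The automorphism `e` fixes `v` and each of its neighbours. -/
def FixesStar (e : Γ ≃g Γ) (v : V) : Prop :=
  e v = v ∧ ∀ w, Γ.Adj v w → e w = w

theorem fixesStar_of_encard_neighborSet_le {e : Γ ≃g Γ} {v p q : V} (hv : e v = v) (hpq : p ≠ q)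
    (hvp : Γ.Adj v p) (hvq : Γ.Adj v q) (hp : e p = p) (hq : e q = q)
    (hcard : (Γ.neighborSet v).encard ≤ 3) : FixesStar e v := by
  refine ⟨hv, fun w hw => apply_eq_self_of_encard_le e.injective (s := Γ.neighborSet v)
    (t := {p, q}) (fun x hx => ?_) ?_ ?_ (Set.toFinite _) ?_ hw⟩
  · simpa only [SimpleGraph.mem_neighborSet, hv] using e.map_adj_iff.mpr hx
  · simp [hp, hq]
  · simp [Set.insert_subset_iff, hvp, hvq]
  · rwa [Set.encard_pair hpq]

theorem FixesStar.of_commonNeighbors {e : Γ ≃g Γ} {b c p q : V} (hb : FixesStar e b) (hpq : p ≠ q)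
    (hbp : Γ.Adj b p) (hbq : Γ.Adj b q) (hcp : Γ.Adj c p) (hcq : Γ.Adj c q)
    (hcommon : (Γ.commonNeighbors p q).encard ≤ 2) (hcard : (Γ.neighborSet c).encard ≤ 3) :
    FixesStar e c := by
  have hp : e p = p := hb.2 p hbp
  have hq : e q = q := hb.2 q hbq
  have hc : e c = c := by
    refine apply_eq_self_of_encard_le e.injective (s := Γ.commonNeighbors p q) (t := {b})
      (fun x hx => ?_) ?_ ?_ (Set.toFinite _) ?_ ⟨hcp.symm, hcq.symm⟩
    · have hx' := And.intro (e.map_adj_iff.mpr hx.1) (e.map_adj_iff.mpr hx.2)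
      rwa [hp, hq] at hx'
    · simp [hb.1]
    · exact Set.singleton_subset_iff.mpr ⟨hbp.symm, hbq.symm⟩
    · rwa [Set.encard_singleton, one_add_one_eq_two]
  exact fixesStar_of_encard_neighborSet_le hc hpq hcp hcq hp hq hcard

end Automorphisms

section IncidenceGraph

variable {P B : Type*} (I : P → B → Prop)

/-- The incidence graph (Levi graph) of a relation between points and blocks. -/
def incidenceGraph : SimpleGraph (P ⊕ B) where
  Adj
    | .inl p, .inr b => I p b
    | .inr b, .inl p => I p b
    | _, _ => False
  symm := ⟨by rintro (_ | _) (_ | _) <;> exact id⟩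
  loopless := ⟨by rintro (_ | _) <;> exact id⟩

variable {I}

theorem neighborSet_incidenceGraph_inl (p : P) :
    (incidenceGraph I).neighborSet (.inl p) = Sum.inr '' {b | I p b} := by
  ext (_ | _) <;> simp [incidenceGraph]

theorem neighborSet_incidenceGraph_inr (b : B) :
    (incidenceGraph I).neighborSet (.inr b) = Sum.inl '' {p | I p b} := by
  ext (_ | _) <;> simp [incidenceGraph]

theorem incidenceGraph_adj_smul_iff {G : Type*} [Group G] [MulAction G P] [MulAction G B]
    (hI : ∀ (g : G) p b, I (g • p) (g • b) ↔ I p b) (g : G) (x y : P ⊕ B) :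
    (incidenceGraph I).Adj (g • x) (g • y) ↔ (incidenceGraph I).Adj x y := by
  cases x <;> cases y <;> simp [incidenceGraph, hI]

end IncidenceGraph

theorem exists_card_eq_and_disjoint_of_not_disjoint {α : Type*} [Fintype α]
    {s t : Finset α} {n : ℕ} (h : ¬Disjoint s t)
    (hcard : s.card + t.card + n ≤ Fintype.card α + 1) :
    ∃ u : Finset α, u.card = n ∧ Disjoint s u ∧ Disjoint u t := by
  classical
  have hinter : 0 < (s ∩ t).card :=
    Finset.card_pos.mpr (Finset.not_disjoint_iff_nonempty_inter.mp h)
  have hunion := Finset.card_union_add_card_inter s t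
  have hcompl : n ≤ (s ∪ t)ᶜ.card := by
    rw [Finset.card_compl]
    omega
  obtain ⟨u, hu, rfl⟩ := Finset.exists_subset_card_eq hcompl
  have hdisj := Finset.disjoint_union_left.mp (Finset.subset_compl_iff_disjoint_left.mp hu)
  exact ⟨u, rfl, hdisj.1, hdisj.2.symm⟩

section Pentagons

open scoped Pointwise

/-- The edge set of the pentagon that visits the given points in cyclic order. -/
def cycleEdges {α : Type*} [DecidableEq α] (a b c d e : α) : Finset (Finset α) :=
  {{a, b}, {b, c}, {c, d}, {d, e}, {e, a}}

/-- The six elements of the `A₅`-orbit of the pentagon `0 1 2 3 4`. -/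
def pentagon : Fin 6 → Finset (Finset (Fin 5)) :=
  ![cycleEdges 0 1 2 3 4, cycleEdges 0 1 3 4 2, cycleEdges 0 1 4 2 3, cycleEdges 0 2 1 4 3,
    cycleEdges 0 3 1 2 4, cycleEdges 0 4 1 3 2]

/-- The six pentagons in one of the two `A₅`-orbits, each given by its set of edges. -/
abbrev Pentagon : Type := MulAction.orbit (alternatingGroup (Fin 5)) (pentagon 0)

/-- The ten edges of `K₅`. -/
abbrev Edge : Type := Set.powersetCard (Fin 5) 2

theorem exists_smul_pentagon_zero_eq (i : Fin 6) :
    ∃ g : alternatingGroup (Fin 5), g • pentagon 0 = pentagon i := by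
  decide +kernel +revert

theorem exists_pentagon_eq_smul (g : alternatingGroup (Fin 5)) :
    ∃ i, pentagon i = g • pentagon 0 := by
  decide +kernel +revert

theorem card_pentagon (i : Fin 6) : (pentagon i).card = 5 := by
  decide +kernel +revert

theorem card_eq_two_of_mem_pentagon (i : Fin 6) : ∀ s ∈ pentagon i, s.card = 2 := by
  decide +kernel +revert

theorem card_pentagon_inter_pentagon {i j : Fin 6} (hij : i ≠ j) :
    (pentagon i ∩ pentagon j).card = 2 := by
  decide +kernel +revert

theorem card_filter_mem_pentagon {s : Finset (Fin 5)} (hs : s.card = 2) :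
    (Finset.univ.filter (s ∈ pentagon ·)).card = 3 := by
  decide +kernel +revert

theorem exists_ne_and_mem_pentagon_of_disjoint {s t : Finset (Fin 5)} (hs : s.card = 2)
    (ht : t.card = 2) (hst : Disjoint s t) :
    ∃ i j, i ≠ j ∧ (s ∈ pentagon i ∧ s ∈ pentagon j) ∧ t ∈ pentagon i ∧ t ∈ pentagon j := by
  decide +kernel +revert

theorem exists_smul_pentagon_eq_of_mem {i j : Fin 6} (hij : i ≠ j) (hi : {0, 1} ∈ pentagon i)
    (hj : {0, 1} ∈ pentagon j) :
    ∃ g : alternatingGroup (Fin 5), g • ({0, 1} : Finset (Fin 5)) = {0, 1} ∧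
      g • pentagon 0 = pentagon i ∧ g • pentagon 1 = pentagon j := by
  decide +kernel +revert

theorem pentagon_injective : Function.Injective pentagon := by
  intro i j hij
  by_contra hne
  have := card_pentagon_inter_pentagon hne
  rw [hij, Finset.inter_self, card_pentagon] at this
  contradiction

/-- The enumeration `pentagon`, as a bijection onto the orbit. -/
noncomputable def pentagonEquiv : Fin 6 ≃ Pentagon :=
  Equiv.ofBijective (fun i => ⟨pentagon i, exists_smul_pentagon_zero_eq i⟩)
    ⟨fun _ _ hij => pentagon_injective (congrArg Subtype.val hij), by
      rintro ⟨_, g, rfl⟩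
      exact (exists_pentagon_eq_smul g).imp fun _ => Subtype.ext⟩

@[simp]
theorem coe_pentagonEquiv (i : Fin 6) : (pentagonEquiv i : Finset (Finset (Fin 5))) = pentagon i :=
  rfl

/-- The edge `{0, 1}`, which lies on the pentagons `pentagon 0` and `pentagon 1`. -/
def baseEdge : Edge := ⟨{0, 1}, rfl⟩

theorem exists_smul_baseEdge_eq {b : Edge} {p q : Pentagon} (hpq : p ≠ q) (hp : b.1 ∈ p.1)
    (hq : b.1 ∈ q.1) : ∃ g : alternatingGroup (Fin 5),
      g • baseEdge = b ∧ g • pentagonEquiv 0 = p ∧ g • pentagonEquiv 1 = q := by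
  have := Set.powersetCard.isPretransitive_alternatingGroup (α := Fin 5) (n := 2) (by simp)
  obtain ⟨g, rfl⟩ := MulAction.exists_smul_eq (alternatingGroup (Fin 5)) baseEdge b
  obtain ⟨i, hi⟩ := pentagonEquiv.surjective (g⁻¹ • p)
  obtain ⟨j, hj⟩ := pentagonEquiv.surjective (g⁻¹ • q)
  obtain rfl := eq_inv_smul_iff.mp hi
  obtain rfl := eq_inv_smul_iff.mp hj
  obtain ⟨k, hk, hki, hkj⟩ := exists_smul_pentagon_eq_of_mem (i := i) (j := j)
    (fun hij => hpq (by rw [hij])) (Finset.smul_mem_smul_finset_iff g |>.mp hp)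
    (Finset.smul_mem_smul_finset_iff g |>.mp hq)
  refine ⟨g * k, ?_, ?_, ?_⟩ <;> rw [mul_smul] <;> congr 1 <;> apply Subtype.ext
  exacts [hk, hki, hkj]

/-- The incidence graph between the six pentagons and the ten edges of `K₅`. -/
def pentagonGraph : SimpleGraph (Pentagon ⊕ Edge) :=
  incidenceGraph fun p b => b.1 ∈ p.1

theorem card_pentagon_sum_edge : Nat.card (Pentagon ⊕ Edge) = 16 := by
  rw [Nat.card_sum, ← Nat.card_congr pentagonEquiv, Set.powersetCard.card]
  simp [Nat.choose]

theorem encard_neighborSet_inl (p : Pentagon) :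
    (pentagonGraph.neighborSet (.inl p)).encard = 5 := by
  obtain ⟨i, rfl⟩ := pentagonEquiv.surjective p
  rw [pentagonGraph, neighborSet_incidenceGraph_inl, Sum.inr_injective.encard_image]
  change (Subtype.val ⁻¹' (pentagon i : Set (Finset (Fin 5)))).encard = 5
  rw [Set.encard_preimage_of_injective_subset_range Subtype.val_injective,
    Set.encard_coe_eq_coe_finsetCard, card_pentagon, Nat.cast_ofNat]
  exact fun s hs => ⟨⟨s, card_eq_two_of_mem_pentagon i s hs⟩, rfl⟩

theorem encard_neighborSet_inr (b : Edge) :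
    (pentagonGraph.neighborSet (.inr b)).encard = 3 := by
  have hb : {p : Pentagon | b.1 ∈ p.1} =
      pentagonEquiv '' (Finset.univ.filter (b.1 ∈ pentagon ·) : Finset (Fin 6)) := by
    ext p
    obtain ⟨i, rfl⟩ := pentagonEquiv.surjective p
    simp
  rw [pentagonGraph, neighborSet_incidenceGraph_inr, Sum.inl_injective.encard_image, hb,
    pentagonEquiv.injective.encard_image, Set.encard_coe_eq_coe_finsetCard,
    card_filter_mem_pentagon (Set.powersetCard.card_eq b), Nat.cast_ofNat]

theorem encard_commonNeighbors_inl_le {p q : Pentagon} (hpq : p ≠ q) :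
    (pentagonGraph.commonNeighbors (.inl p) (.inl q)).encard ≤ 2 := by
  obtain ⟨i, rfl⟩ := pentagonEquiv.surjective p
  obtain ⟨j, rfl⟩ := pentagonEquiv.surjective q
  rw [SimpleGraph.commonNeighbors, pentagonGraph, neighborSet_incidenceGraph_inl,
    neighborSet_incidenceGraph_inl, ← Set.image_inter Sum.inr_injective,
    Sum.inr_injective.encard_image, ← Subtype.val_injective.encard_image]
  calc _ ≤ ((pentagon i ∩ pentagon j : Finset (Finset (Fin 5))) : Set _).encard :=
        Set.encard_le_encard (by rintro _ ⟨b, hb, rfl⟩; simpa using hb)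
    _ = 2 := by
      rw [Set.encard_coe_eq_coe_finsetCard,
        card_pentagon_inter_pentagon (ne_of_apply_ne pentagonEquiv hpq), Nat.cast_ofNat]

theorem exists_apply_inr_eq (e : pentagonGraph ≃g pentagonGraph) (b : Edge) :
    ∃ c, e (.inr b) = .inr c := by
  have hcard := encard_neighborSet_apply e (.inr b)
  rcases hx : e (.inr b) with p | c
  · rw [hx, encard_neighborSet_inl, encard_neighborSet_inr] at hcard
    norm_num at hcard
  · exact ⟨c, rfl⟩

theorem FixesStar.of_disjoint {e : pentagonGraph ≃g pentagonGraph} {b c : Edge}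
    (hb : FixesStar e (.inr b)) (hbc : Disjoint b.1 c.1) : FixesStar e (.inr c) := by
  obtain ⟨i, j, hij, hb', hc'⟩ := exists_ne_and_mem_pentagon_of_disjoint b.2 c.2 hbc
  have hne : pentagonEquiv i ≠ pentagonEquiv j := pentagonEquiv.injective.ne hij
  exact hb.of_commonNeighbors (Sum.inl_injective.ne hne) hb'.1 hb'.2 hc'.1 hc'.2
    (encard_commonNeighbors_inl_le hne) (encard_neighborSet_inr c).le

theorem FixesStar.eq_one {e : pentagonGraph ≃g pentagonGraph} {b : Edge}
    (hb : FixesStar e (.inr b)) : e = 1 := by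
  have hstar (c : Edge) : FixesStar e (.inr c) := by
    by_cases hbc : Disjoint b.1 c.1
    · exact hb.of_disjoint hbc
    · obtain ⟨d, hd, hbd, hdc⟩ := exists_card_eq_and_disjoint_of_not_disjoint (n := 2) hbc
        (by simp [Set.powersetCard.card_eq])
      exact (hb.of_disjoint (c := ⟨d, hd⟩) hbd).of_disjoint hdc
  ext (p | c)
  · obtain ⟨i, rfl⟩ := pentagonEquiv.surjective p
    obtain ⟨s, hs⟩ : (pentagon i).Nonempty := Finset.card_pos.mp (by simp [card_pentagon])
    exact (hstar ⟨s, card_eq_two_of_mem_pentagon i s hs⟩).2 _ hs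
  · exact (hstar c).1

/-- An edge and two pentagons through it, used as a base for the automorphism group. -/
def baseFlag : Set (Pentagon ⊕ Edge) :=
  {.inr baseEdge, .inl (pentagonEquiv 0), .inl (pentagonEquiv 1)}

theorem pentagonGraph_adj_smul_iff (g : alternatingGroup (Fin 5)) (x y : Pentagon ⊕ Edge) :
    pentagonGraph.Adj (g • x) (g • y) ↔ pentagonGraph.Adj x y :=
  incidenceGraph_adj_smul_iff (fun g _ _ => Finset.smul_mem_smul_finset_iff g) g x y

theorem pentagonEquiv_zero_ne_one : pentagonEquiv 0 ≠ pentagonEquiv 1 :=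
  pentagonEquiv.injective.ne (by decide)

theorem baseEdge_adj_zero : pentagonGraph.Adj (.inr baseEdge) (.inl (pentagonEquiv 0)) :=
  show {0, 1} ∈ pentagon 0 by decide

theorem baseEdge_adj_one : pentagonGraph.Adj (.inr baseEdge) (.inl (pentagonEquiv 1)) :=
  show {0, 1} ∈ pentagon 1 by decide

theorem eq_one_of_forall_mem_baseFlag (e : pentagonGraph ≃g pentagonGraph)
    (he : ∀ x ∈ baseFlag, e x = x) : e = 1 := by
  simp only [baseFlag, Set.forall_mem_insert, Set.mem_singleton_iff, forall_eq] at he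
  obtain ⟨hb, hp, hq⟩ := he
  exact (fixesStar_of_encard_neighborSet_le hb (Sum.inl_injective.ne pentagonEquiv_zero_ne_one)
    baseEdge_adj_zero baseEdge_adj_one hp hq (encard_neighborSet_inr _).le).eq_one

theorem exists_forall_mem_baseFlag_smul_eq (e : pentagonGraph ≃g pentagonGraph) :
    ∃ g : alternatingGroup (Fin 5), ∀ x ∈ baseFlag, g • x = e x := by
  obtain ⟨b, hb⟩ := exists_apply_inr_eq e baseEdge
  have hp := e.map_adj_iff.mpr baseEdge_adj_zero
  have hq := e.map_adj_iff.mpr baseEdge_adj_one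
  rw [hb] at hp hq
  obtain ⟨p, hbp, hep⟩ := (neighborSet_incidenceGraph_inr b).subset hp
  obtain ⟨q, hbq, heq⟩ := (neighborSet_incidenceGraph_inr b).subset hq
  have hpq : p ≠ q := by
    rintro rfl
    exact pentagonEquiv_zero_ne_one (Sum.inl_injective (e.injective (hep.symm.trans heq)))
  obtain ⟨g, hgb, hgp, hgq⟩ := exists_smul_baseEdge_eq hpq hbp hbq
  exact ⟨g, by simp [baseFlag, hb, ← hep, ← heq, hgb, hgp, hgq]⟩

/-- The action of `A₅` identifies it with the automorphism group of `pentagonGraph`. -/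
noncomputable def alternatingGroupEquivAut :
    alternatingGroup (Fin 5) ≃* (pentagonGraph ≃g pentagonGraph) :=
  have : FaithfulSMul (alternatingGroup (Fin 5)) Edge :=
    Set.powersetCard.faithfulSMul (by norm_num) (by simp; norm_num)
  MulEquiv.ofBijective (smulAut pentagonGraph_adj_smul_iff) ⟨smulAut_injective,
    smulAut_surjective_of_base exists_forall_mem_baseFlag_smul_eq eq_one_of_forall_mem_baseFlag⟩

end Pentagons

/-- There is a simple graph on 16 vertices with automorphism group isomorphic to `A₅`;
in particular `μ(A₅) ≤ 16`. -/
theorem stmt_2 :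
    (∃ Γ : SimpleGraph (Fin 16), Nonempty ((Γ ≃g Γ) ≃* alternatingGroup (Fin 5))) ∧
      mu (alternatingGroup (Fin 5)) ≤ 16 := by
  have h : ∃ Γ : SimpleGraph (Fin 16), Nonempty ((Γ ≃g Γ) ≃* alternatingGroup (Fin 5)) := by
    obtain ⟨Γ, ⟨φ⟩⟩ := exists_simpleGraph_fin_aut pentagonGraph card_pentagon_sum_edge
    exact ⟨Γ, ⟨φ.trans alternatingGroupEquivAut.symm⟩⟩
  exact ⟨h, Nat.sInf_le h⟩
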